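/- Let W₁, W₂ be regular bivariate matrix pencils (i.e., p₁ and p₂ are not the zero polynomial), let (λ₀,μ₀) ∈ ℂ² be a finite eigenvalue of the two-parameter problem, and assume the genericity conditions (1)–(6) hold at (λ₀,μ₀). Then (λ₀,μ₀) is a finite eigenvalue of the associated pair of pencils (Δ₁ − λΔ₀, Δ₂ − μΔ₀). -/

import Mathlib

open Matrix Kronecker

noncomputable section

def vkron {n₁ n₂ : ℕ} (x : Fin n₁ → ℂ) (y : Fin n₂ → ℂ) : Fin n₁ × Fin n₂ → ℂ :=
  fun p => x p.1 * y p.2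

def GKer {N : Type*} [Fintype N] (A B : Matrix N N ℂ) (ξ : ℂ) :
    Submodule ℂ (N → ℂ) :=
  Submodule.span ℂ {v | ∃ p : N → Polynomial ℂ,
    (∀ t : ℂ, (A - t • B).mulVec (fun i => (p i).eval t) = 0) ∧
    v = fun i => (p i).eval ξ}

def RedMin {N : Type*} [Fintype N] (A B : Matrix N N ℂ) : Submodule ℂ (N → ℂ) :=
  Submodule.span ℂ (⋃ ξ : ℂ, (GKer A B ξ : Set (N → ℂ)))

def nrank {N : Type*} [Fintype N] (A B : Matrix N N ℂ) : ℕ :=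
  ⨆ ξ : ℂ, (A - ξ • B).rank

def Wmat {n : ℕ} (A B C : Matrix (Fin n) (Fin n) ℂ) (l m : ℂ) :
    Matrix (Fin n) (Fin n) ℂ := A + l • B + m • C

def charPoly {n : ℕ} (A B C : Matrix (Fin n) (Fin n) ℂ) : MvPolynomial (Fin 2) ℂ :=
  Matrix.det (Matrix.of fun i j =>
    MvPolynomial.C (A i j) + MvPolynomial.X 0 * MvPolynomial.C (B i j)
      + MvPolynomial.X 1 * MvPolynomial.C (C i j))

def ev2 (p : MvPolynomial (Fin 2) ℂ) (l m : ℂ) : ℂ := MvPolynomial.eval ![l, m] p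

def Delta0 {n₁ n₂ : ℕ} (B₁ C₁ : Matrix (Fin n₁) (Fin n₁) ℂ)
    (B₂ C₂ : Matrix (Fin n₂) (Fin n₂) ℂ) :
    Matrix (Fin n₁ × Fin n₂) (Fin n₁ × Fin n₂) ℂ :=
  B₁ ⊗ₖ C₂ - C₁ ⊗ₖ B₂

def Delta1 {n₁ n₂ : ℕ} (A₁ C₁ : Matrix (Fin n₁) (Fin n₁) ℂ)
    (A₂ C₂ : Matrix (Fin n₂) (Fin n₂) ℂ) :
    Matrix (Fin n₁ × Fin n₂) (Fin n₁ × Fin n₂) ℂ :=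
  C₁ ⊗ₖ A₂ - A₁ ⊗ₖ C₂

def Delta2 {n₁ n₂ : ℕ} (A₁ B₁ : Matrix (Fin n₁) (Fin n₁) ℂ)
    (A₂ B₂ : Matrix (Fin n₂) (Fin n₂) ℂ) :
    Matrix (Fin n₁ × Fin n₂) (Fin n₁ × Fin n₂) ℂ :=
  A₁ ⊗ₖ B₂ - B₁ ⊗ₖ A₂

/-- `(λ₀,μ₀)` is a finite eigenvalue of the two-parameter problem. -/
def IsFiniteEigW {n₁ n₂ : ℕ}
    (A₁ B₁ C₁ : Matrix (Fin n₁) (Fin n₁) ℂ) (A₂ B₂ C₂ : Matrix (Fin n₂) (Fin n₂) ℂ)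
    (l₀ m₀ : ℂ) : Prop :=
  (∀ q : MvPolynomial (Fin 2) ℂ,
      q ∣ charPoly A₁ B₁ C₁ → q ∣ charPoly A₂ B₂ C₂ →
      (¬ ∃ c : ℂ, q = MvPolynomial.C c) → ev2 q l₀ m₀ ≠ 0) ∧
  (∃ x₁ : Fin n₁ → ℂ, x₁ ≠ 0 ∧ (Wmat A₁ B₁ C₁ l₀ m₀).mulVec x₁ = 0) ∧
  (∃ x₂ : Fin n₂ → ℂ, x₂ ≠ 0 ∧ (Wmat A₂ B₂ C₂ l₀ m₀).mulVec x₂ = 0)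

/-- `(λ₀,μ₀)` is a finite eigenvalue of the pair of pencils
`(Δ₁ − λΔ₀, Δ₂ − μΔ₀)`. -/
def IsFiniteEigDelta {n₁ n₂ : ℕ}
    (A₁ B₁ C₁ : Matrix (Fin n₁) (Fin n₁) ℂ) (A₂ B₂ C₂ : Matrix (Fin n₂) (Fin n₂) ℂ)
    (l₀ m₀ : ℂ) : Prop :=
  (Delta1 A₁ C₁ A₂ C₂ - l₀ • Delta0 B₁ C₁ B₂ C₂).rank
      < nrank (Delta1 A₁ C₁ A₂ C₂) (Delta0 B₁ C₁ B₂ C₂) ∧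
  (Delta2 A₁ B₁ A₂ B₂ - m₀ • Delta0 B₁ C₁ B₂ C₂).rank
      < nrank (Delta2 A₁ B₁ A₂ B₂) (Delta0 B₁ C₁ B₂ C₂) ∧
  ∃ z : Fin n₁ × Fin n₂ → ℂ, z ≠ 0 ∧
    (Delta1 A₁ C₁ A₂ C₂).mulVec z = l₀ • (Delta0 B₁ C₁ B₂ C₂).mulVec z ∧
    (Delta2 A₁ B₁ A₂ B₂).mulVec z = m₀ • (Delta0 B₁ C₁ B₂ C₂).mulVec z ∧
    z ∉ RedMin (Delta1 A₁ C₁ A₂ C₂) (Delta0 B₁ C₁ B₂ C₂) ∧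
    z ∉ RedMin (Delta2 A₁ B₁ A₂ B₂) (Delta0 B₁ C₁ B₂ C₂)

/-- Genericity conditions (1)–(6) at `(λ₀,μ₀)`. -/
def Generic {n₁ n₂ : ℕ}
    (A₁ B₁ C₁ : Matrix (Fin n₁) (Fin n₁) ℂ) (A₂ B₂ C₂ : Matrix (Fin n₂) (Fin n₂) ℂ)
    (l₀ m₀ : ℂ) : Prop :=
  -- (1) the univariate polynomial `γ ↦ pᵢ(λ₀,γ)` is not identically zero
  (∃ γ : ℂ, ev2 (charPoly A₁ B₁ C₁) l₀ γ ≠ 0) ∧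
  (∃ γ : ℂ, ev2 (charPoly A₂ B₂ C₂) l₀ γ ≠ 0) ∧
  -- (2) the univariate polynomial `β ↦ pᵢ(β,μ₀)` is not identically zero
  (∃ β : ℂ, ev2 (charPoly A₁ B₁ C₁) β m₀ ≠ 0) ∧
  (∃ β : ℂ, ev2 (charPoly A₂ B₂ C₂) β m₀ ≠ 0) ∧
  -- (3)
  (∃ ε > (0:ℝ), ∀ η : ℂ, η ≠ l₀ → ‖η - l₀‖ < ε →
    (Wmat A₁ B₁ C₁ η m₀).rank = n₁ ∧ (Wmat A₂ B₂ C₂ η m₀).rank = n₂) ∧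
  -- (4)
  (∃ ε > (0:ℝ), ∀ θ : ℂ, θ ≠ m₀ → ‖θ - m₀‖ < ε →
    (Wmat A₁ B₁ C₁ l₀ θ).rank = n₁ ∧ (Wmat A₂ B₂ C₂ l₀ θ).rank = n₂) ∧
  -- (5)
  (∀ l₁ m₁ : ℂ, IsFiniteEigW A₁ B₁ C₁ A₂ B₂ C₂ l₁ m₁ → (l₁, m₁) ≠ (l₀, m₀) →
    l₁ ≠ l₀ ∧ m₁ ≠ m₀) ∧
  -- (6)
  (∃ ε > (0:ℝ), ∀ η θ : ℂ, (η, θ) ≠ (l₀, m₀) → ‖η - l₀‖ + ‖θ - m₀‖ < ε →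
    (Wmat A₁ B₁ C₁ l₀ m₀).rank + (Wmat A₂ B₂ C₂ l₀ m₀).rank <
    (Wmat A₁ B₁ C₁ η θ).rank + (Wmat A₂ B₂ C₂ η θ).rank)

/-!
Let `z = x₁ ⊗ x₂` be built from kernel vectors of `W₁` and `W₂` at `(λ₀, μ₀)`. Two facts about a
pencil `A - λ B` reduce everything to `z ∉ GKer (Δ₁ - λ₀ Δ₀)`. First, each `v` in the minimal
reducing subspace satisfies `(A - λ B) s(λ) = B v` for some polynomial vector `s`; if also
`(A - ξ B) v = 0`, then `v + (λ - ξ) s(λ)` is a polynomial kernel vector through `v`. Second, if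
`A - ξ B` has maximal rank and `U` is a constant matrix of complementary rank with `A - ξ B + U`
invertible, then `(A - λ B) adj(A - λ B + U) U = 0`, and the columns of `adj(A - ξ B + U) U` span
the whole kernel of `A - ξ B`.

Suppose `z = p(λ₀)` with `(Δ₁ - λ Δ₀) p(λ) = 0`. Since
`Δ₁ - λ Δ₀ = C₁ ⊗ W₂(λ, μ) - W₁(λ, μ) ⊗ C₂` for every `μ`, arranging `p` as a matrix `Y` gives
`W₂ Y C₁ᵀ = C₂ Y W₁ᵀ`. Multiplying by the adjugates of `W₂` and `W₁ᵀ` and cancelling the common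
factor of the two determinants shows that, on the line `λ = λ₀`, `μ - μ₀` divides `gcd(p₁, p₂) Y`.
As the gcd does not vanish at `(λ₀, μ₀)`, this forces `z = 0`. Interchanging `λ` and `μ`
interchanges `Δ₁` and `-Δ₂`.
-/

section Divisibility

variable {R S m n : Type*} [CommRing R] [GCDMonoid R] [CommRing S] [IsDomain S]

theorem dvd_map_gcd_mul (φ : R →+* S) {a b u v : R} {s z : S} (huv : b * u = a * v)
    (hu : φ a * z = s * φ u) (hv : φ b * z = s * φ v) (hab : φ a ≠ 0 ∨ φ b ≠ 0) :
    s ∣ φ (gcd a b) * z := by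
  rcases hab with ha | hb
  · obtain ⟨w, hw⟩ : a ∣ gcd a b * u := dvd_gcd_mul_of_dvd_mul ⟨v, huv⟩
    refine ⟨φ w, mul_left_cancel₀ ha ?_⟩
    have hφw : φ (gcd a b) * φ u = φ a * φ w := by rw [← map_mul, hw, map_mul]
    linear_combination φ (gcd a b) * hu + s * hφw
  · obtain ⟨w, hw⟩ : b ∣ gcd a b * v :=
      (dvd_gcd_mul_of_dvd_mul ⟨u, huv.symm⟩).trans (mul_dvd_mul_right (gcd_comm' b a).dvd v)
    refine ⟨φ w, mul_left_cancel₀ hb ?_⟩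
    have hφw : φ (gcd a b) * φ v = φ b * φ w := by rw [← map_mul, hw, map_mul]
    linear_combination φ (gcd a b) * hv + s * hφw

variable [Fintype m] [DecidableEq m] [Fintype n] [DecidableEq n]

theorem dvd_map_gcd_det_mul (φ : R →+* S) {P D : Matrix m m R} {Q E : Matrix n n R}
    {X : Matrix m n R} {s : S} (hX : P * X * E = D * X * Q)
    (hP : (P * X).map φ = s • (D * X).map φ) (hQ : (X * Q).map φ = s • (X * E).map φ)
    (hdet : φ P.det ≠ 0 ∨ φ Q.det ≠ 0) (i : m) (j : n) :
    s ∣ φ (gcd P.det Q.det) * φ (X i j) := by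
  have hadj : Q.det • (P.adjugate * (D * X)) = P.det • (X * E * Q.adjugate) :=
    calc Q.det • (P.adjugate * (D * X))
        = P.adjugate * (D * X * Q) * Q.adjugate := by simp [Matrix.mul_assoc, mul_adjugate]
      _ = P.adjugate * (P * X * E) * Q.adjugate := by rw [hX]
      _ = P.det • (X * E * Q.adjugate) := by simp [← Matrix.mul_assoc, adjugate_mul]
  have hu : (P.det • X).map φ = s • (P.adjugate * (D * X)).map φ :=
    calc (P.det • X).map φ
        = (P.adjugate * (P * X)).map φ := by simp [← Matrix.mul_assoc, adjugate_mul]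
      _ = s • (P.adjugate * (D * X)).map φ := by
        rw [Matrix.map_mul, hP, Matrix.mul_smul, ← Matrix.map_mul]
  have hv : (Q.det • X).map φ = s • (X * E * Q.adjugate).map φ :=
    calc (Q.det • X).map φ
        = (X * Q * Q.adjugate).map φ := by simp [Matrix.mul_assoc, mul_adjugate]
      _ = s • (X * E * Q.adjugate).map φ := by
        rw [Matrix.map_mul, hQ, Matrix.smul_mul, ← Matrix.map_mul]
  refine dvd_map_gcd_mul φ (congrFun₂ hadj i j) ?_ ?_ hdet
  · simpa only [map_apply, Matrix.smul_apply, smul_eq_mul, map_mul] using congrFun₂ hu i j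
  · simpa only [map_apply, Matrix.smul_apply, smul_eq_mul, map_mul] using congrFun₂ hv i j

end Divisibility

theorem ringHom_comp_mulVec {R S m n : Type*} [NonAssocSemiring R] [NonAssocSemiring S] [Fintype n]
    (f : R →+* S) (M : Matrix m n R) (v : n → R) : f ∘ (M *ᵥ v) = M.map f *ᵥ (f ∘ v) :=
  funext (f.map_mulVec M v)

section Rank

variable {K N : Type*} [Field K] [Fintype N]

theorem exists_det_add_ne_zero_and_rank_add_rank_le [DecidableEq N] (M : Matrix N N K) :
    ∃ U : Matrix N N K, (M + U).det ≠ 0 ∧ M.rank + U.rank ≤ Fintype.card N := by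
  obtain ⟨T, hT⟩ := (LinearMap.ker M.mulVecLin).exists_isCompl
  have hinj : Function.Injective (M.mulVecLin.domRestrict T) :=
    LinearMap.ker_eq_bot.mp (LinearMap.ker_domRestrict T M.mulVecLin ▸
      Submodule.disjoint_iff_comap_eq_bot.mp hT.disjoint.symm)
  obtain ⟨g, hg⟩ :=
    Submodule.exists_linearEquiv_restrict_eq (LinearEquiv.ofInjective _ hinj)
  refine ⟨LinearMap.toMatrix' g.toLinearMap - M, ?_, ?_⟩
  · rw [add_sub_cancel, LinearMap.det_toMatrix']
    exact g.isUnit_det'.ne_zero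
  · set U := LinearMap.toMatrix' g.toLinearMap - M
    have hTU : T ≤ LinearMap.ker U.mulVecLin := fun v hv => by
      simpa [U, sub_mulVec, sub_eq_zero] using (hg ⟨v, hv⟩).symm
    have hM := LinearMap.finrank_range_add_finrank_ker M.mulVecLin
    have hU := LinearMap.finrank_range_add_finrank_ker U.mulVecLin
    have hcompl := Submodule.finrank_add_eq_of_isCompl hT
    have hle := Submodule.finrank_mono hTU
    rw [Module.finrank_fintype_fun_eq_card] at hM hU hcompl
    rw [Matrix.rank, Matrix.rank]
    omega

theorem mul_eq_zero_of_add_eq_one_of_rank_add_rank_le [DecidableEq N] {E F : Matrix N N K}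
    (hEF : E + F = 1) (hrank : E.rank + F.rank ≤ Fintype.card N) : E * F = 0 := by
  have hcomm : E * F = F * E := by
    rw [eq_sub_of_add_eq hEF]; noncomm_ring
  have hsup : LinearMap.range E.mulVecLin ⊔ LinearMap.range F.mulVecLin = ⊤ := by
    refine eq_top_iff.mpr fun v _ => Submodule.mem_sup.mpr
      ⟨E *ᵥ v, ⟨v, rfl⟩, F *ᵥ v, ⟨v, rfl⟩, ?_⟩
    rw [← add_mulVec, hEF, one_mulVec]
  have hinf : LinearMap.range E.mulVecLin ⊓ LinearMap.range F.mulVecLin = ⊥ := by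
    have hdim := Submodule.finrank_sup_add_finrank_inf_eq
      (LinearMap.range E.mulVecLin) (LinearMap.range F.mulVecLin)
    rw [hsup, finrank_top, Module.finrank_fintype_fun_eq_card] at hdim
    rw [Matrix.rank, Matrix.rank] at hrank
    exact Submodule.finrank_eq_zero.mp (by omega)
  refine Matrix.ext_of_mulVec_single fun i => ?_
  rw [zero_mulVec, ← Submodule.mem_bot K, ← hinf]
  refine ⟨⟨F *ᵥ Pi.single i 1, ?_⟩, ⟨E *ᵥ Pi.single i 1, ?_⟩⟩
  · rw [mulVecLin_apply, mulVec_mulVec]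
  · rw [mulVecLin_apply, mulVec_mulVec, hcomm]

theorem mul_adjugate_add_mul_eq_zero [DecidableEq N] {M U : Matrix N N K} (hdet : (M + U).det ≠ 0)
    (hrank : M.rank + U.rank ≤ Fintype.card N) : M * (M + U).adjugate * U = 0 := by
  have hunit : IsUnit (M + U).det := hdet.isUnit
  have hprod : M * (M + U)⁻¹ * U = 0 := by
    have hEF : (M + U)⁻¹ * M * ((M + U)⁻¹ * U) = 0 := by
      apply mul_eq_zero_of_add_eq_one_of_rank_add_rank_le
      · rw [← Matrix.mul_add, nonsing_inv_mul _ hunit]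
      · rwa [rank_mul_eq_right_of_isUnit_det _ _ (isUnit_nonsing_inv_det _ hunit),
          rank_mul_eq_right_of_isUnit_det _ _ (isUnit_nonsing_inv_det _ hunit)]
    calc M * (M + U)⁻¹ * U = (M + U) * ((M + U)⁻¹ * M * ((M + U)⁻¹ * U)) := by
          simp only [← Matrix.mul_assoc, mul_nonsing_inv _ hunit, Matrix.one_mul]
      _ = 0 := by rw [hEF, Matrix.mul_zero]
  rw [inv_def, Ring.inverse_eq_inv', Matrix.mul_smul, Matrix.smul_mul] at hprod
  exact (smul_eq_zero.mp hprod).resolve_left (inv_ne_zero hdet)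

end Rank

section PolynomialMatrix

open Polynomial

theorem map_C_map_evalRingHom {R m n : Type*} [CommSemiring R] (M : Matrix m n R) (t : R) :
    (M.map C).map (evalRingHom t) = M := by
  ext
  simp

variable {K N : Type*} [Field K] [Infinite K] [Fintype N]

theorem mul_adjugate_add_map_C_mul_eq_zero [DecidableEq N] {M : Matrix N N K[X]}
    {U : Matrix N N K} (hdet : (M + U.map C).det ≠ 0)
    (hrank : ∀ t : K, (M.map (evalRingHom t)).rank + U.rank ≤ Fintype.card N) :
    M * (M + U.map C).adjugate * U.map C = 0 := by
  suffices h : (M + U.map C).det • (M * (M + U.map C).adjugate * U.map C) = 0 from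
    (smul_eq_zero.mp h).resolve_left hdet
  ext1 i j
  refine Polynomial.funext fun t => ?_
  have hU := map_C_map_evalRingHom U t
  have hdet_eval : (M + U.map C).det.eval t = (M.map (evalRingHom t) + U).det := by
    rw [← coe_evalRingHom, RingHom.map_det, map_add, RingHom.mapMatrix_apply,
      RingHom.mapMatrix_apply, hU]
  have heval : (M * (M + U.map C).adjugate * U.map C).map (evalRingHom t) =
      M.map (evalRingHom t) * (M.map (evalRingHom t) + U).adjugate * U := by
    simp only [← RingHom.mapMatrix_apply, map_mul, RingHom.map_adjugate, map_add]
    simp only [RingHom.mapMatrix_apply, hU]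
  by_cases ht : (M.map (evalRingHom t) + U).det = 0
  · rw [Matrix.smul_apply, smul_eq_mul, eval_mul, hdet_eval, ht, zero_mul, Matrix.zero_apply,
      eval_zero]
  · have hij := congrFun₂ (heval.trans (mul_adjugate_add_mul_eq_zero ht (hrank t))) i j
    rw [map_apply, coe_evalRingHom] at hij
    simp [hij]

theorem exists_mulVec_eq_zero_and_eval_comp_eq {M : Matrix N N K[X]} {ξ : K} {z : N → K}
    (hrank : ∀ t : K, (M.map (evalRingHom t)).rank ≤ (M.map (evalRingHom ξ)).rank)
    (hz : M.map (evalRingHom ξ) *ᵥ z = 0) :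
    ∃ p : N → K[X], M *ᵥ p = 0 ∧ eval ξ ∘ p = z := by
  classical
  obtain ⟨U, hdet, hU⟩ := exists_det_add_ne_zero_and_rank_add_rank_le (M.map (evalRingHom ξ))
  set Mξ := M.map (evalRingHom ξ)
  have hUξ := map_C_map_evalRingHom U ξ
  have hMU : (evalRingHom ξ).mapMatrix (M + U.map C) = Mξ + U := by
    rw [map_add, RingHom.mapMatrix_apply, RingHom.mapMatrix_apply, hUξ]
  have hMU_det : (M + U.map C).det ≠ 0 := fun h => hdet <| by
    rw [← hMU, ← RingHom.map_det, h, map_zero]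
  have hUz : U *ᵥ z = (Mξ + U) *ᵥ z := by rw [add_mulVec, hz, zero_add]
  have heval_adj : ((M + U.map C).adjugate * U.map C).map (evalRingHom ξ) =
      (Mξ + U).adjugate * U := by
    rw [Matrix.map_mul, ← RingHom.mapMatrix_apply, RingHom.map_adjugate, hMU, hUξ]
  refine ⟨((M + U.map C).adjugate * U.map C) *ᵥ (C ∘ ((Mξ + U).det⁻¹ • z)), ?_, ?_⟩
  · rw [mulVec_mulVec, ← Matrix.mul_assoc, mul_adjugate_add_map_C_mul_eq_zero hMU_det
      fun t => (Nat.add_le_add_right (hrank t) _).trans hU, zero_mulVec]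
  · have hC : ⇑(evalRingHom ξ) ∘ C ∘ ((Mξ + U).det⁻¹ • z) = (Mξ + U).det⁻¹ • z := by ext; simp
    calc eval ξ ∘ (((M + U.map C).adjugate * U.map C) *ᵥ (C ∘ ((Mξ + U).det⁻¹ • z)))
        = ((Mξ + U).adjugate * U) *ᵥ ((Mξ + U).det⁻¹ • z) := by
          rw [← heval_adj]
          exact (ringHom_comp_mulVec (evalRingHom ξ) _ _).trans (by rw [hC])
      _ = z := by
          rw [mulVec_smul, ← mulVec_mulVec, hUz, mulVec_mulVec, adjugate_mul, smul_mulVec,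
            one_mulVec, inv_smul_smul₀ hdet]

end PolynomialMatrix

section GenericKernel

open Polynomial

variable {N : Type*}

/-- The pencil `A - λ B` as a matrix of polynomials in `λ`. -/
def matrixPencil {R : Type*} [CommRing R] (A B : Matrix N N R) : Matrix N N R[X] :=
  A.map C - (X : R[X]) • B.map C

theorem matrixPencil_map_eval {R : Type*} [CommRing R] (A B : Matrix N N R) (t : R) :
    (matrixPencil A B).map (evalRingHom t) = A - t • B := by
  ext i j
  simp [matrixPencil, mul_comm t]

theorem matrixPencil_neg {R : Type*} [CommRing R] (A B : Matrix N N R) :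
    matrixPencil (-A) (-B) = -matrixPencil A B := by
  ext1 i j
  simp only [matrixPencil, Matrix.sub_apply, Matrix.neg_apply, Matrix.smul_apply, map_apply,
    map_neg, smul_eq_mul]
  ring

variable [Fintype N]

theorem eval_comp_matrixPencil_mulVec {R : Type*} [CommRing R] (A B : Matrix N N R)
    (p : N → R[X]) (t : R) :
    eval t ∘ (matrixPencil A B *ᵥ p) = (A - t • B) *ᵥ (eval t ∘ p) := by
  rw [← matrixPencil_map_eval]
  exact ringHom_comp_mulVec (evalRingHom t) _ p

theorem matrixPencil_mulVec_eq_zero_iff {R : Type*} [CommRing R] [IsDomain R] [Infinite R]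
    {A B : Matrix N N R} {p : N → R[X]} :
    matrixPencil A B *ᵥ p = 0 ↔ ∀ t : R, (A - t • B) *ᵥ (eval t ∘ p) = 0 := by
  simp only [← eval_comp_matrixPencil_mulVec, funext_iff, Function.comp_apply, Pi.zero_apply]
  refine ⟨fun h t i => by simp [h], fun h i => Polynomial.funext fun t => by simp [h]⟩

theorem matrixPencil_mulVec_C_comp {R : Type*} [CommRing R] {A B : Matrix N N R} {ξ : R}
    {z : N → R} (hker : (A - ξ • B) *ᵥ z = 0) :
    matrixPencil A B *ᵥ (C ∘ z) = -((X - C ξ) • (C ∘ (B *ᵥ z))) := by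
  have hmap : ∀ M : Matrix N N R, M.map C *ᵥ (C ∘ z) = C ∘ (M *ᵥ z) :=
    fun M => (ringHom_comp_mulVec C M z).symm
  have hA : A *ᵥ z = ξ • (B *ᵥ z) := by rwa [sub_mulVec, smul_mulVec, sub_eq_zero] at hker
  rw [matrixPencil, sub_mulVec, smul_mulVec, hmap, hmap, hA]
  ext1 i
  simp only [Pi.sub_apply, Pi.neg_apply, Pi.smul_apply, Function.comp_apply, smul_eq_mul, map_mul]
  ring

variable {A B : Matrix N N ℂ} {ξ : ℂ} {z : N → ℂ}

theorem mem_GKer_iff :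
    z ∈ GKer A B ξ ↔ ∃ p : N → ℂ[X], matrixPencil A B *ᵥ p = 0 ∧ eval ξ ∘ p = z := by
  let V : Submodule ℂ (N → ℂ) :=
    ((LinearMap.ker (matrixPencil A B).mulVecLin).restrictScalars ℂ).map ((leval ξ).compLeft N)
  suffices h : GKer A B ξ = V by simp only [h, V]; rfl
  rw [GKer, ← Submodule.span_eq V]
  congr 1
  ext v
  constructor
  · rintro ⟨p, hp, rfl⟩
    exact ⟨p, matrixPencil_mulVec_eq_zero_iff.mpr hp, rfl⟩
  · rintro ⟨p, hp, rfl⟩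
    exact ⟨p, matrixPencil_mulVec_eq_zero_iff.mp hp, rfl⟩

theorem GKer_neg : GKer (-A) (-B) ξ = GKer A B ξ := by
  ext z
  simp only [mem_GKer_iff, matrixPencil_neg, neg_mulVec, neg_eq_zero]

theorem exists_matrixPencil_mulVec_eq_of_mem_GKer (hz : z ∈ GKer A B ξ) :
    ∃ s : N → ℂ[X], matrixPencil A B *ᵥ s = C ∘ (B *ᵥ z) := by
  obtain ⟨p, hp, rfl⟩ := mem_GKer_iff.mp hz
  have hker : (A - ξ • B) *ᵥ (eval ξ ∘ p) = 0 := matrixPencil_mulVec_eq_zero_iff.mp hp ξ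
  have hdvd : ∀ i, X - C ξ ∣ p i - C ((p i).eval ξ) := fun i => X_sub_C_dvd_sub_C_eval
  choose s hs using hdvd
  have hs' : (X - C ξ) • s = p - C ∘ eval ξ ∘ p := funext fun i => (hs i).symm
  refine ⟨s, smul_right_injective _ (X_sub_C_ne_zero ξ) ?_⟩
  calc (X - C ξ) • (matrixPencil A B *ᵥ s)
      = matrixPencil A B *ᵥ (p - C ∘ eval ξ ∘ p) := by rw [← hs', mulVec_smul]
    _ = (X - C ξ) • (C ∘ (B *ᵥ (eval ξ ∘ p))) := by
      rw [mulVec_sub, hp, matrixPencil_mulVec_C_comp hker, zero_sub, neg_neg]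

theorem exists_matrixPencil_mulVec_eq_of_mem_RedMin (hz : z ∈ RedMin A B) :
    ∃ s : N → ℂ[X], matrixPencil A B *ᵥ s = C ∘ (B *ᵥ z) := by
  let V : Submodule ℂ (N → ℂ) :=
    ((LinearMap.range (matrixPencil A B).mulVecLin).restrictScalars ℂ).comap
      ((Algebra.linearMap ℂ ℂ[X]).compLeft N ∘ₗ B.mulVecLin)
  suffices h : RedMin A B ≤ V from h hz
  refine Submodule.span_le.mpr (Set.iUnion_subset fun ξ v hv => ?_)
  exact exists_matrixPencil_mulVec_eq_of_mem_GKer hv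

theorem mem_GKer_of_mem_RedMin (hz : z ∈ RedMin A B) (hker : (A - ξ • B) *ᵥ z = 0) :
    z ∈ GKer A B ξ := by
  obtain ⟨s, hs⟩ := exists_matrixPencil_mulVec_eq_of_mem_RedMin hz
  refine mem_GKer_iff.mpr ⟨C ∘ z + (X - C ξ : ℂ[X]) • s, ?_, ?_⟩
  · rw [mulVec_add, mulVec_smul, hs, matrixPencil_mulVec_C_comp hker, neg_add_cancel]
  · ext i
    simp

theorem rank_sub_smul_le_nrank (A B : Matrix N N ℂ) (t : ℂ) : (A - t • B).rank ≤ nrank A B :=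
  le_ciSup (f := fun t : ℂ => (A - t • B).rank)
    ⟨Fintype.card N, by rintro _ ⟨t, rfl⟩; exact rank_le_card_width _⟩ t

theorem mem_GKer_of_nrank_le_rank (hrank : nrank A B ≤ (A - ξ • B).rank)
    (hker : (A - ξ • B) *ᵥ z = 0) : z ∈ GKer A B ξ := by
  refine mem_GKer_iff.mpr (exists_mulVec_eq_zero_and_eval_comp_eq (fun t => ?_) ?_)
  · rw [matrixPencil_map_eval, matrixPencil_map_eval]
    exact (rank_sub_smul_le_nrank A B t).trans hrank
  · rwa [matrixPencil_map_eval]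

theorem rank_lt_nrank_of_notMem_GKer (hker : (A - ξ • B) *ᵥ z = 0) (hz : z ∉ GKer A B ξ) :
    (A - ξ • B).rank < nrank A B :=
  not_le.mp fun h => hz (mem_GKer_of_nrank_le_rank h hker)

end GenericKernel

section Line

open Polynomial

variable {R : Type*} [CommRing R]

/-- The restriction `q(λ, μ) ↦ q(l, μ)` of bivariate polynomials to the line `λ = l`. -/
def restrictLine (l : R) : MvPolynomial (Fin 2) R →+* R[X] :=
  MvPolynomial.eval₂Hom C ![C l, X]

@[simp]
theorem restrictLine_C (l r : R) : restrictLine l (MvPolynomial.C r) = C r :=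
  MvPolynomial.eval₂Hom_C _ _ _

@[simp]
theorem restrictLine_X_zero (l : R) : restrictLine l (MvPolynomial.X 0) = C l :=
  MvPolynomial.eval₂Hom_X' _ _ _

@[simp]
theorem restrictLine_X_one (l : R) : restrictLine l (MvPolynomial.X 1) = X :=
  MvPolynomial.eval₂Hom_X' _ _ _

theorem X_sub_C_dvd_of_restrictLine_eq_zero {l : R} {q : MvPolynomial (Fin 2) R}
    (hq : restrictLine l q = 0) : MvPolynomial.X 0 - MvPolynomial.C l ∣ q := by
  let π := Ideal.Quotient.mk
    (Ideal.span {MvPolynomial.X (R := R) (σ := Fin 2) 0 - MvPolynomial.C l})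
  have hcomp : (π.comp (eval₂RingHom MvPolynomial.C (MvPolynomial.X 1))).comp
      (restrictLine l) = π := by
    refine MvPolynomial.ringHom_ext (fun r => by simp) fun i => ?_
    fin_cases i
    · simpa [π] using
        (Ideal.Quotient.eq.mpr (Ideal.mem_span_singleton_self _)).symm
    · simp
  rw [← Ideal.mem_span_singleton, ← Ideal.Quotient.eq_zero_iff_mem]
  change π q = 0
  rw [← hcomp, RingHom.comp_apply, hq, map_zero]

theorem map_C_map_restrictLine {m n : Type*} (M : Matrix m n R) (l : R) :
    (M.map (MvPolynomial.C (σ := Fin 2))).map (restrictLine l) = M.map C := by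
  ext1 i j
  simp

theorem restrictLine_eval₂RingHom (l : R) (p : R[X]) :
    restrictLine l (eval₂RingHom MvPolynomial.C (MvPolynomial.X 0) p) = C (p.eval l) := by
  have hC : (restrictLine l).comp MvPolynomial.C = C := RingHom.ext (restrictLine_C l)
  rw [coe_eval₂RingHom, hom_eval₂, hC, restrictLine_X_zero, eval₂_at_apply]

theorem eval_restrictLine (q : MvPolynomial (Fin 2) ℂ) (l m : ℂ) :
    (restrictLine l q).eval m = ev2 q l m := by
  have hcomp : (evalRingHom m).comp (restrictLine l) = MvPolynomial.eval ![l, m] := by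
    refine MvPolynomial.ringHom_ext (fun r => by simp) fun i => ?_
    fin_cases i <;> simp
  exact DFunLike.congr_fun hcomp q

end Line

section BivariatePencil

open Polynomial

variable {n : ℕ} (A B D : Matrix (Fin n) (Fin n) ℂ)

/-- `W(λ, μ) = A + λ B + μ D` as a matrix over `ℂ[λ, μ]`. -/
def bivariatePencil : Matrix (Fin n) (Fin n) (MvPolynomial (Fin 2) ℂ) :=
  Matrix.of fun i j =>
    MvPolynomial.C (A i j) + MvPolynomial.X 0 * MvPolynomial.C (B i j)
      + MvPolynomial.X 1 * MvPolynomial.C (D i j)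

theorem det_bivariatePencil : (bivariatePencil A B D).det = charPoly A B D := rfl

theorem bivariatePencil_map_restrictLine (l m : ℂ) :
    (bivariatePencil A B D).map (restrictLine l) =
      (Wmat A B D l m).map C + (X - C m : ℂ[X]) • D.map C := by
  ext1 i j
  simp only [bivariatePencil, Wmat, map_apply, of_apply, Matrix.add_apply, Matrix.smul_apply,
    smul_eq_mul, map_add, map_mul, restrictLine_C, restrictLine_X_zero, restrictLine_X_one]
  ring

theorem bivariatePencil_map_restrictLine_mulVec {l m : ℂ} {x : Fin n → ℂ}
    (hx : Wmat A B D l m *ᵥ x = 0) :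
    (bivariatePencil A B D).map (restrictLine l) *ᵥ (C ∘ x) =
      (X - C m : ℂ[X]) • (D.map C *ᵥ (C ∘ x)) := by
  have hWx : (Wmat A B D l m).map C *ᵥ (C ∘ x) = 0 := by
    rw [← ringHom_comp_mulVec, hx]
    exact funext fun _ => map_zero C
  rw [bivariatePencil_map_restrictLine A B D l m, add_mulVec, smul_mulVec, hWx, zero_add]

end BivariatePencil

section OperatorDeterminants

open Polynomial

variable {n₁ n₂ : ℕ} {A₁ B₁ C₁ : Matrix (Fin n₁) (Fin n₁) ℂ}
  {A₂ B₂ C₂ : Matrix (Fin n₂) (Fin n₂) ℂ} {l₀ m₀ : ℂ}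

theorem matrixPencil_Delta1_map_eval₂RingHom :
    (matrixPencil (Delta1 A₁ C₁ A₂ C₂) (Delta0 B₁ C₁ B₂ C₂)).map
        (eval₂RingHom MvPolynomial.C (MvPolynomial.X (0 : Fin 2))) =
      C₁.map MvPolynomial.C ⊗ₖ bivariatePencil A₂ B₂ C₂ -
        bivariatePencil A₁ B₁ C₁ ⊗ₖ C₂.map MvPolynomial.C := by
  ext1 i j
  simp only [matrixPencil, Delta1, Delta0, bivariatePencil, map_apply, of_apply, Matrix.sub_apply,
    Matrix.smul_apply, smul_eq_mul, kroneckerMap_apply, map_sub, map_mul, coe_eval₂RingHom,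
    eval₂_sub, eval₂_mul, eval₂_C, eval₂_X]
  ring

theorem bivariatePencil_mul_mul_transpose {p : Fin n₁ × Fin n₂ → ℂ[X]}
    (hp : matrixPencil (Delta1 A₁ C₁ A₂ C₂) (Delta0 B₁ C₁ B₂ C₂) *ᵥ p = 0)
    {Y : Matrix (Fin n₂) (Fin n₁) (MvPolynomial (Fin 2) ℂ)}
    (hY : vec Y = eval₂RingHom MvPolynomial.C (MvPolynomial.X 0) ∘ p) :
    bivariatePencil A₂ B₂ C₂ * Y * (C₁.map (MvPolynomial.C (σ := Fin 2)))ᵀ =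
      C₂.map (MvPolynomial.C (σ := Fin 2)) * Y * (bivariatePencil A₁ B₁ C₁)ᵀ := by
  rw [← vec_inj, ← sub_eq_zero, ← kronecker_mulVec_vec, ← kronecker_mulVec_vec, ← sub_mulVec,
    ← matrixPencil_Delta1_map_eval₂RingHom, hY, ← ringHom_comp_mulVec, hp]
  exact funext fun _ => map_zero _

theorem vkron_ne_zero {x : Fin n₁ → ℂ} {y : Fin n₂ → ℂ} (hx : x ≠ 0) (hy : y ≠ 0) :
    vkron x y ≠ 0 := by
  obtain ⟨i, hi⟩ := Function.ne_iff.mp hx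
  obtain ⟨j, hj⟩ := Function.ne_iff.mp hy
  exact Function.ne_iff.mpr ⟨(i, j), mul_ne_zero hi hj⟩

theorem kronecker_mulVec_vkron (M : Matrix (Fin n₁) (Fin n₁) ℂ) (M' : Matrix (Fin n₂) (Fin n₂) ℂ)
    (x : Fin n₁ → ℂ) (y : Fin n₂ → ℂ) :
    (M ⊗ₖ M') *ᵥ vkron x y = vkron (M *ᵥ x) (M' *ᵥ y) := by
  ext i
  simp only [mulVec, dotProduct, vkron, kroneckerMap_apply, Fintype.sum_prod_type,
    Finset.sum_mul_sum, mul_mul_mul_comm]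

theorem Delta1_sub_smul_Delta0 (l m : ℂ) :
    Delta1 A₁ C₁ A₂ C₂ - l • Delta0 B₁ C₁ B₂ C₂ =
      C₁ ⊗ₖ Wmat A₂ B₂ C₂ l m - Wmat A₁ B₁ C₁ l m ⊗ₖ C₂ := by
  ext1 i j
  simp only [Delta1, Delta0, Wmat, Matrix.sub_apply, Matrix.add_apply, Matrix.smul_apply,
    smul_eq_mul, kroneckerMap_apply]
  ring

theorem Delta1_sub_smul_Delta0_mulVec_vkron {x₁ : Fin n₁ → ℂ} {x₂ : Fin n₂ → ℂ}
    (hx₁ : Wmat A₁ B₁ C₁ l₀ m₀ *ᵥ x₁ = 0) (hx₂ : Wmat A₂ B₂ C₂ l₀ m₀ *ᵥ x₂ = 0) :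
    (Delta1 A₁ C₁ A₂ C₂ - l₀ • Delta0 B₁ C₁ B₂ C₂) *ᵥ vkron x₁ x₂ = 0 := by
  rw [Delta1_sub_smul_Delta0 l₀ m₀, sub_mulVec, kronecker_mulVec_vkron, kronecker_mulVec_vkron,
    hx₁, hx₂]
  ext i
  simp [vkron]

end OperatorDeterminants

section Eigenvalue

open Polynomial

variable {n₁ n₂ : ℕ} {A₁ B₁ C₁ : Matrix (Fin n₁) (Fin n₁) ℂ}
  {A₂ B₂ C₂ : Matrix (Fin n₂) (Fin n₂) ℂ} {l₀ m₀ : ℂ} {x₁ : Fin n₁ → ℂ} {x₂ : Fin n₂ → ℂ}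

theorem X_sub_C_dvd_restrictLine_gcd_mul [GCDMonoid (MvPolynomial (Fin 2) ℂ)]
    {p : Fin n₁ × Fin n₂ → ℂ[X]}
    (hp : matrixPencil (Delta1 A₁ C₁ A₂ C₂) (Delta0 B₁ C₁ B₂ C₂) *ᵥ p = 0)
    (hpx : eval l₀ ∘ p = vkron x₁ x₂)
    (hx₁ : Wmat A₁ B₁ C₁ l₀ m₀ *ᵥ x₁ = 0) (hx₂ : Wmat A₂ B₂ C₂ l₀ m₀ *ᵥ x₂ = 0)
    (hdet : restrictLine l₀ (charPoly A₂ B₂ C₂) ≠ 0 ∨ restrictLine l₀ (charPoly A₁ B₁ C₁) ≠ 0)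
    (i : Fin n₁) (j : Fin n₂) :
    X - C m₀ ∣ restrictLine l₀ (gcd (charPoly A₂ B₂ C₂) (charPoly A₁ B₁ C₁)) *
      C (x₁ i * x₂ j) := by
  let Y : Matrix (Fin n₂) (Fin n₁) (MvPolynomial (Fin 2) ℂ) :=
    of fun j i => eval₂RingHom MvPolynomial.C (MvPolynomial.X 0) (p (i, j))
  have hY_apply : ∀ i j, restrictLine l₀ (Y j i) = C (x₁ i * x₂ j) := fun i j =>
    (restrictLine_eval₂RingHom l₀ _).trans (congrArg C (congrFun hpx (i, j)))
  have hY : Y.map (restrictLine l₀) = vecMulVec (C ∘ x₂) (C ∘ x₁) := by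
    ext1 j i
    rw [map_apply, hY_apply, mul_comm, map_mul]
    rfl
  have hP : (bivariatePencil A₂ B₂ C₂ * Y).map (restrictLine l₀) =
      (X - C m₀ : ℂ[X]) • (C₂.map (MvPolynomial.C (σ := Fin 2)) * Y).map (restrictLine l₀) := by
    rw [Matrix.map_mul, Matrix.map_mul, hY, mul_vecMulVec, mul_vecMulVec, map_C_map_restrictLine,
      bivariatePencil_map_restrictLine_mulVec _ _ _ hx₂, smul_vecMulVec]
  have hQ : (Y * (bivariatePencil A₁ B₁ C₁)ᵀ).map (restrictLine l₀) =
      (X - C m₀ : ℂ[X]) • (Y * (C₁.map (MvPolynomial.C (σ := Fin 2)))ᵀ).map (restrictLine l₀) := by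
    rw [Matrix.map_mul, Matrix.map_mul, hY, vecMulVec_mul, vecMulVec_mul, transpose_map,
      transpose_map, vecMul_transpose, vecMul_transpose, map_C_map_restrictLine,
      bivariatePencil_map_restrictLine_mulVec _ _ _ hx₁, vecMulVec_smul]
  have hdvd := dvd_map_gcd_det_mul (restrictLine l₀) (bivariatePencil_mul_mul_transpose hp rfl)
    hP hQ (by rwa [det_transpose, det_bivariatePencil, det_bivariatePencil]) j i
  rwa [det_transpose, det_bivariatePencil, det_bivariatePencil, hY_apply] at hdvd

theorem IsFiniteEigW.ev2_ne_zero_of_dvd (heig : IsFiniteEigW A₁ B₁ C₁ A₂ B₂ C₂ l₀ m₀)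
    {q : MvPolynomial (Fin 2) ℂ} (hq₁ : q ∣ charPoly A₁ B₁ C₁) (hq₂ : q ∣ charPoly A₂ B₂ C₂) :
    ev2 q l₀ m₀ ≠ 0 := by
  by_cases hconst : ∃ c : ℂ, q = MvPolynomial.C c
  · obtain ⟨c, rfl⟩ := hconst
    rw [ev2, MvPolynomial.eval_C]
    rintro rfl
    rw [map_zero, zero_dvd_iff] at hq₁ hq₂
    refine heig.1 (MvPolynomial.X 0 - MvPolynomial.C l₀) (hq₁ ▸ dvd_zero _) (hq₂ ▸ dvd_zero _)
      ?_ (by simp [ev2])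
    rintro ⟨c, hc⟩
    have heval : ∀ t : ℂ, t - l₀ = c := fun t => by
      simpa using congrArg (MvPolynomial.eval ![t, 0]) hc
    exact absurd ((heval (l₀ + 1)).trans (heval l₀).symm) (by simp)
  · exact heig.1 q hq₁ hq₂ hconst

theorem IsFiniteEigW.restrictLine_charPoly_ne_zero
    (heig : IsFiniteEigW A₁ B₁ C₁ A₂ B₂ C₂ l₀ m₀) :
    restrictLine l₀ (charPoly A₂ B₂ C₂) ≠ 0 ∨ restrictLine l₀ (charPoly A₁ B₁ C₁) ≠ 0 := by
  by_contra! h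
  exact heig.ev2_ne_zero_of_dvd (X_sub_C_dvd_of_restrictLine_eq_zero h.2)
    (X_sub_C_dvd_of_restrictLine_eq_zero h.1) (by simp [ev2])

theorem IsFiniteEigW.vkron_notMem_GKer_Delta1 (heig : IsFiniteEigW A₁ B₁ C₁ A₂ B₂ C₂ l₀ m₀)
    (hx₁ : Wmat A₁ B₁ C₁ l₀ m₀ *ᵥ x₁ = 0) (hx₂ : Wmat A₂ B₂ C₂ l₀ m₀ *ᵥ x₂ = 0)
    (hne : vkron x₁ x₂ ≠ 0) :
    vkron x₁ x₂ ∉ GKer (Delta1 A₁ C₁ A₂ C₂) (Delta0 B₁ C₁ B₂ C₂) l₀ := by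
  let _ := UniqueFactorizationMonoid.toGCDMonoid (MvPolynomial (Fin 2) ℂ)
  intro hz
  obtain ⟨p, hp, hpx⟩ := mem_GKer_iff.mp hz
  obtain ⟨⟨i, j⟩, hij⟩ := Function.ne_iff.mp hne
  have hroot := dvd_iff_isRoot.mp <| X_sub_C_dvd_restrictLine_gcd_mul hp hpx hx₁ hx₂
    heig.restrictLine_charPoly_ne_zero i j
  rw [IsRoot, eval_mul, eval_restrictLine, eval_C] at hroot
  exact mul_ne_zero (heig.ev2_ne_zero_of_dvd (gcd_dvd_right _ _) (gcd_dvd_left _ _)) hij hroot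

end Eigenvalue

section Swap

variable {n₁ n₂ : ℕ} {A₁ B₁ C₁ : Matrix (Fin n₁) (Fin n₁) ℂ}
  {A₂ B₂ C₂ : Matrix (Fin n₂) (Fin n₂) ℂ} {l₀ m₀ : ℂ} {x₁ : Fin n₁ → ℂ} {x₂ : Fin n₂ → ℂ}

theorem Wmat_swap {n : ℕ} (A B D : Matrix (Fin n) (Fin n) ℂ) (l m : ℂ) :
    Wmat A D B m l = Wmat A B D l m :=
  add_right_comm _ _ _

/-- The interchange `q(λ, μ) ↦ q(μ, λ)` of the two variables. -/
def swapVars : MvPolynomial (Fin 2) ℂ ≃ₐ[ℂ] MvPolynomial (Fin 2) ℂ :=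
  MvPolynomial.renameEquiv ℂ (Equiv.swap 0 1)

theorem swapVars_charPoly {n : ℕ} (A B D : Matrix (Fin n) (Fin n) ℂ) :
    swapVars (charPoly A B D) = charPoly A D B := by
  rw [charPoly, charPoly, AlgEquiv.map_det]
  congr 1
  ext1 i j
  simp only [swapVars, AlgEquiv.mapMatrix_apply, map_apply, of_apply,
    MvPolynomial.renameEquiv_apply, map_add, map_mul, MvPolynomial.rename_C, MvPolynomial.rename_X,
    Equiv.swap_apply_left, Equiv.swap_apply_right]
  ring

theorem ev2_swapVars (q : MvPolynomial (Fin 2) ℂ) (l m : ℂ) :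
    ev2 (swapVars q) m l = ev2 q l m := by
  rw [ev2, ev2, swapVars, MvPolynomial.renameEquiv_apply, MvPolynomial.eval_rename]
  congr 2
  ext i
  fin_cases i <;> rfl

theorem IsFiniteEigW.swap (heig : IsFiniteEigW A₁ B₁ C₁ A₂ B₂ C₂ l₀ m₀) :
    IsFiniteEigW A₁ C₁ B₁ A₂ C₂ B₂ m₀ l₀ := by
  obtain ⟨hdiv, hx₁, hx₂⟩ := heig
  refine ⟨fun q hq₁ hq₂ hq => ?_, by simpa only [Wmat_swap] using hx₁,
    by simpa only [Wmat_swap] using hx₂⟩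
  rw [← ev2_swapVars]
  refine hdiv _ ?_ ?_ fun ⟨c, hc⟩ => hq ⟨c, ?_⟩
  · simpa only [swapVars_charPoly] using map_dvd swapVars hq₁
  · simpa only [swapVars_charPoly] using map_dvd swapVars hq₂
  · rw [← swapVars.injective.eq_iff, hc, ← MvPolynomial.algebraMap_eq, swapVars.commutes]

theorem Delta1_swap : Delta1 A₁ B₁ A₂ B₂ = -Delta2 A₁ B₁ A₂ B₂ := (neg_sub _ _).symm

theorem Delta0_swap : Delta0 C₁ B₁ C₂ B₂ = -Delta0 B₁ C₁ B₂ C₂ := (neg_sub _ _).symm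

theorem Delta2_sub_smul_Delta0_mulVec_vkron
    (hx₁ : Wmat A₁ B₁ C₁ l₀ m₀ *ᵥ x₁ = 0) (hx₂ : Wmat A₂ B₂ C₂ l₀ m₀ *ᵥ x₂ = 0) :
    (Delta2 A₁ B₁ A₂ B₂ - m₀ • Delta0 B₁ C₁ B₂ C₂) *ᵥ vkron x₁ x₂ = 0 := by
  rw [← Wmat_swap] at hx₁ hx₂
  have h := Delta1_sub_smul_Delta0_mulVec_vkron hx₁ hx₂
  rw [Delta1_swap, Delta0_swap, smul_neg, ← neg_sub', neg_mulVec, neg_eq_zero] at h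
  exact h

theorem IsFiniteEigW.vkron_notMem_GKer_Delta2 (heig : IsFiniteEigW A₁ B₁ C₁ A₂ B₂ C₂ l₀ m₀)
    (hx₁ : Wmat A₁ B₁ C₁ l₀ m₀ *ᵥ x₁ = 0) (hx₂ : Wmat A₂ B₂ C₂ l₀ m₀ *ᵥ x₂ = 0)
    (hne : vkron x₁ x₂ ≠ 0) :
    vkron x₁ x₂ ∉ GKer (Delta2 A₁ B₁ A₂ B₂) (Delta0 B₁ C₁ B₂ C₂) m₀ := by
  rw [← Wmat_swap] at hx₁ hx₂
  rw [← GKer_neg, ← Delta1_swap, ← Delta0_swap]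
  exact heig.swap.vkron_notMem_GKer_Delta1 hx₁ hx₂ hne

end Swap

theorem eigW_to_eigDelta_general {n₁ n₂ : ℕ}
    (A₁ B₁ C₁ : Matrix (Fin n₁) (Fin n₁) ℂ) (A₂ B₂ C₂ : Matrix (Fin n₂) (Fin n₂) ℂ)
    (l₀ m₀ : ℂ) (heig : IsFiniteEigW A₁ B₁ C₁ A₂ B₂ C₂ l₀ m₀) :
    IsFiniteEigDelta A₁ B₁ C₁ A₂ B₂ C₂ l₀ m₀ := by
  have ⟨_, ⟨x₁, hx₁0, hx₁⟩, ⟨x₂, hx₂0, hx₂⟩⟩ := heig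
  have hne : vkron x₁ x₂ ≠ 0 := vkron_ne_zero hx₁0 hx₂0
  have hker₁ := Delta1_sub_smul_Delta0_mulVec_vkron hx₁ hx₂
  have hker₂ := Delta2_sub_smul_Delta0_mulVec_vkron hx₁ hx₂
  have hz₁ := heig.vkron_notMem_GKer_Delta1 hx₁ hx₂ hne
  have hz₂ := heig.vkron_notMem_GKer_Delta2 hx₁ hx₂ hne
  refine ⟨rank_lt_nrank_of_notMem_GKer hker₁ hz₁, rank_lt_nrank_of_notMem_GKer hker₂ hz₂,
    vkron x₁ x₂, hne, ?_, ?_, fun h => hz₁ (mem_GKer_of_mem_RedMin h hker₁),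
    fun h => hz₂ (mem_GKer_of_mem_RedMin h hker₂)⟩
  · rwa [sub_mulVec, smul_mulVec, sub_eq_zero] at hker₁
  · rwa [sub_mulVec, smul_mulVec, sub_eq_zero] at hker₂

/-- **Theorem (W ⇒ Δ).** If the pencils `W₁, W₂` are regular, `(λ₀,μ₀)` is a finite
eigenvalue of the two-parameter problem, and the genericity conditions (1)–(6) hold at
`(λ₀,μ₀)`, then `(λ₀,μ₀)` is a finite eigenvalue of the associated pair of pencils
`(Δ₁ − λΔ₀, Δ₂ − μΔ₀)`. -/
theorem eigW_to_eigDelta {n₁ n₂ : ℕ}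
    (A₁ B₁ C₁ : Matrix (Fin n₁) (Fin n₁) ℂ) (A₂ B₂ C₂ : Matrix (Fin n₂) (Fin n₂) ℂ)
    (l₀ m₀ : ℂ)
    (hreg₁ : charPoly A₁ B₁ C₁ ≠ 0) (hreg₂ : charPoly A₂ B₂ C₂ ≠ 0)
    (heig : IsFiniteEigW A₁ B₁ C₁ A₂ B₂ C₂ l₀ m₀)
    (hgen : Generic A₁ B₁ C₁ A₂ B₂ C₂ l₀ m₀) :
    IsFiniteEigDelta A₁ B₁ C₁ A₂ B₂ C₂ l₀ m₀ := by
  exact eigW_to_eigDelta_general A₁ B₁ C₁ A₂ B₂ C₂ l₀ m₀ heig
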